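/- arXiv:1804.03069 — 3 statements merged into one kernel-verified Lean document; each statement's English description precedes it below -/
import Mathlib

section
/- Let k ≥ 1 be an integer, let a ≥ 0 and b ≥ 1 be fixed reals. Then as m → ∞, ∫_0^∞ x^{b-1} e^{-a x} (Γ(k,x)/Γ(k))^m dx = (1 + O(m^{-1/(2k)})) · (k!)^{b/k} Γ(b/k) m^{-b/k} / k. -/
open MeasureTheory Real Set

/-- The upper incomplete gamma function `Γ(k,x) = ∫_x^∞ t^{k-1} e^{-t} dt`. -/
noncomputable def upperGamma (k : ℕ) (x : ℝ) : ℝ :=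
  ∫ t in Set.Ioi x, t ^ (k - 1) * Real.exp (-t)

/-!
Laplace's method at the endpoint `0`. Near `0` the function `Q(x) = Γ(k,x)/Γ(k)` agrees with
`exp(-x^k/k!)` up to `O(x^{k+1})`, and globally both are at most `exp(-cμ)`, where
`μ = min(x, x^k)`. Hence their `m`-th powers differ by `O(m x μ exp(-cmμ/2))`, and as
`t exp(-t)` is bounded, this is `O(x exp(-cmμ/4))`: the error costs one extra factor `x`, which is
worth `m^{-1/k}` after integration. The factor `e^{-ax} = 1 + O(x e^{|a|x})` costs no more.
-/

open Asymptotics Filter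

section LaplaceMethod

variable {b c p x : ℝ} {m : ℕ}

lemma le_one_add_min_rpow (hp : 1 ≤ p) (hx : 0 ≤ x) : x ≤ 1 + min x (x ^ p) := by
  rcases le_total x 1 with hx1 | hx1
  · have : 0 ≤ min x (x ^ p) := le_min hx (rpow_nonneg hx p)
    linarith
  · rw [min_eq_left (self_le_rpow_of_one_le hx1 hp)]
    linarith

lemma exp_neg_mul_min_le_add (c x y : ℝ) :
    exp (-(c * min x y)) ≤ exp (-c * x) + exp (-c * y) := by
  rw [← neg_mul]
  rcases min_choice x y with h | h <;> rw [h]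
  · exact le_add_of_nonneg_right (exp_pos _).le
  · exact le_add_of_nonneg_left (exp_pos _).le

lemma exp_mul_mul_exp_neg_le {α μ : ℝ} (hx : 0 ≤ x) (hxμ : x ≤ 1 + μ) (hμ : 0 ≤ μ)
    (hα : 4 * |α| ≤ 3 * (c * m)) :
    exp (α * x) * exp (-(c * μ)) ^ m ≤ exp |α| * exp (-(c / 4 * m * μ)) := by
  rw [← exp_nat_mul, ← exp_add, ← exp_add]
  apply exp_le_exp.2
  have hαx : α * x ≤ |α| * (1 + μ) := by gcongr; exact le_abs_self α
  have hαμ := mul_le_mul_of_nonneg_right hα hμ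
  linarith

lemma abs_pow_sub_pow_le_of_abs_le_exp {d y z μ : ℝ} (hc : 0 < c) (hd : 0 ≤ d) (hμ : 0 ≤ μ)
    (hm : 2 ≤ m) (hy : |y| ≤ exp (-(c * μ))) (hz : |z| ≤ exp (-(c * μ)))
    (hyz : |y - z| ≤ d * μ) :
    |y ^ m - z ^ m| ≤ 4 / c * d * exp (-(c / 4 * m * μ)) := by
  have hexp_pow : exp (-(c * μ)) ^ (m - 1) ≤ exp (-(c / 2 * m * μ)) := by
    rw [← exp_nat_mul, Nat.cast_pred (by omega)]
    have hm' : (2 : ℝ) ≤ m := by exact_mod_cast hm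
    have : 0 ≤ c * μ * (m - 2) := by have := sub_nonneg.2 hm'; positivity
    exact exp_le_exp.2 (by linarith)
  have hmul_le : m * μ ≤ 4 / c * exp (c / 4 * m * μ) := by
    have := add_one_le_exp (c / 4 * m * μ)
    rw [div_mul_eq_mul_div, le_div_iff₀ hc]
    linarith
  calc |y ^ m - z ^ m|
      ≤ |y - z| * m * max |y| |z| ^ (m - 1) := abs_pow_sub_pow_le y z m
    _ ≤ d * μ * m * exp (-(c * μ)) ^ (m - 1) := by gcongr; exact max_le hy hz
    _ ≤ d * μ * m * exp (-(c / 2 * m * μ)) := by gcongr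
    _ = d * (m * μ) * exp (-(c / 2 * m * μ)) := by ring
    _ ≤ d * (4 / c * exp (c / 4 * m * μ)) * exp (-(c / 2 * m * μ)) := by gcongr
    _ = 4 / c * d * (exp (c / 4 * m * μ) * exp (-(c / 2 * m * μ))) := by ring
    _ = 4 / c * d * exp (-(c / 4 * m * μ)) := by rw [← exp_add]; ring_nf

lemma abs_mul_pow_sub_pow_le {A D α w y z μ : ℝ} (hc : 0 < c) (hD : 0 ≤ D) (hx : 0 ≤ x)
    (hxμ : x ≤ 1 + μ) (hμ : 0 ≤ μ) (hm : 2 ≤ m) (hα : 4 * |α| ≤ 3 * (c * m))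
    (hw : |w - 1| ≤ A * x * exp (α * x)) (hy : |y| ≤ exp (-(c * μ)))
    (hz : |z| ≤ exp (-(c * μ))) (hyz : |y - z| ≤ D * x * μ) :
    |w * y ^ m - z ^ m| ≤ (A * exp |α| + 4 / c * D) * (x * exp (-(c / 4 * m * μ))) := by
  have hAx : 0 ≤ A * x := nonneg_of_mul_nonneg_left ((abs_nonneg _).trans hw) (exp_pos _)
  have hamplitude : |(w - 1) * y ^ m| ≤ A * exp |α| * x * exp (-(c / 4 * m * μ)) :=
    calc |(w - 1) * y ^ m| = |w - 1| * |y| ^ m := by rw [abs_mul, abs_pow]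
      _ ≤ A * x * exp (α * x) * exp (-(c * μ)) ^ m := by gcongr
      _ = A * x * (exp (α * x) * exp (-(c * μ)) ^ m) := by ring
      _ ≤ A * x * (exp |α| * exp (-(c / 4 * m * μ))) :=
        mul_le_mul_of_nonneg_left (exp_mul_mul_exp_neg_le hx hxμ hμ hα) hAx
      _ = A * exp |α| * x * exp (-(c / 4 * m * μ)) := by ring
  have hphase : |y ^ m - z ^ m| ≤ 4 / c * (D * x) * exp (-(c / 4 * m * μ)) :=
    abs_pow_sub_pow_le_of_abs_le_exp hc (mul_nonneg hD hx) hμ hm hy hz hyz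
  calc |w * y ^ m - z ^ m| = |(w - 1) * y ^ m + (y ^ m - z ^ m)| := by ring_nf
    _ ≤ |(w - 1) * y ^ m| + |y ^ m - z ^ m| := abs_add_le _ _
    _ ≤ _ := add_le_add hamplitude hphase
    _ = _ := by ring

lemma isBigO_integral_rpow_mul_exp_neg_mul_rpow {q s : ℝ} (hq : 0 < q) (hs : -1 < s)
    (hc : 0 < c) :
    (fun m : ℕ => ∫ x in Ioi (0 : ℝ), x ^ s * exp (-(c * m) * x ^ q))
      =O[atTop] fun m : ℕ => (m : ℝ) ^ (-((s + 1) / q)) := by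
  have heq : (fun m : ℕ => ∫ x in Ioi (0 : ℝ), x ^ s * exp (-(c * m) * x ^ q)) =ᶠ[atTop]
      fun m : ℕ => c ^ (-((s + 1) / q)) * (1 / q) * Gamma ((s + 1) / q) *
        (m : ℝ) ^ (-((s + 1) / q)) := by
    filter_upwards [eventually_gt_atTop 0] with m hm
    rw [integral_rpow_mul_exp_neg_mul_rpow hq hs (by positivity), neg_div,
      mul_rpow hc.le m.cast_nonneg]
    ring
  exact heq.trans_isBigO ((isBigO_refl _ _).const_mul_left _)

lemma isBigO_natCast_rpow_neg {r s : ℝ} (h : r ≤ s) :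
    (fun m : ℕ => (m : ℝ) ^ (-s)) =O[atTop] fun m : ℕ => (m : ℝ) ^ (-r) := by
  refine IsBigO.of_bound 1 ?_
  filter_upwards [eventually_ge_atTop 1] with m hm
  rw [one_mul, norm_of_nonneg (by positivity), norm_of_nonneg (by positivity)]
  exact rpow_le_rpow_of_exponent_le (by exact_mod_cast hm) (neg_le_neg h)

/-- Dominates `x ^ b * exp (-(c * m * min x (x ^ p)))`. Its first exponential handles large `x`,
its second one small `x`. -/
noncomputable def laplaceMajorant (b c p : ℝ) (m : ℕ) (x : ℝ) : ℝ :=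
  x ^ b * exp (-(c * m) * x ^ (1 : ℝ)) + x ^ b * exp (-(c * m) * x ^ p)

lemma rpow_mul_exp_neg_mul_min_le_laplaceMajorant (hx : 0 ≤ x) :
    x ^ b * exp (-(c * m * min x (x ^ p))) ≤ laplaceMajorant b c p m x := by
  rw [laplaceMajorant, ← mul_add, rpow_one]
  exact mul_le_mul_of_nonneg_left (exp_neg_mul_min_le_add _ _ _) (rpow_nonneg hx b)

lemma integrableOn_laplaceMajorant (hb : -1 < b) (hc : 0 < c) (hp : 0 < p) (hm : 0 < m) :
    IntegrableOn (laplaceMajorant b c p m) (Ioi 0) :=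
  (integrableOn_rpow_mul_exp_neg_mul_rpow hb one_pos (by positivity)).add
    (integrableOn_rpow_mul_exp_neg_mul_rpow hb hp (by positivity))

lemma isBigO_integral_laplaceMajorant (hb : -1 < b) (hc : 0 < c) (hp : 1 ≤ p) :
    (fun m : ℕ => ∫ x in Ioi (0 : ℝ), laplaceMajorant b c p m x)
      =O[atTop] fun m : ℕ => (m : ℝ) ^ (-((b + 1) / p)) := by
  have hp0 : 0 < p := one_pos.trans_le hp
  have hexponent : (b + 1) / p ≤ (b + 1) / 1 :=
    div_le_div_of_nonneg_left (by linarith) one_pos hp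
  have hlinear := (isBigO_integral_rpow_mul_exp_neg_mul_rpow one_pos hb hc).trans
    (isBigO_natCast_rpow_neg hexponent)
  refine (hlinear.add (isBigO_integral_rpow_mul_exp_neg_mul_rpow hp0 hb hc)).congr' ?_ .rfl
  filter_upwards [eventually_gt_atTop 0] with m hm
  exact (integral_add (integrableOn_rpow_mul_exp_neg_mul_rpow hb one_pos (by positivity))
    (integrableOn_rpow_mul_exp_neg_mul_rpow hb hp0 (by positivity))).symm

lemma norm_integral_sub_integral_le_of_norm_sub_le {X E : Type*} [MeasurableSpace X]
    [NormedAddCommGroup E] [NormedSpace ℝ E] {ν : Measure X} {F G : X → E} {M : X → ℝ}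
    (hF : AEStronglyMeasurable F ν) (hG : Integrable G ν) (hM : Integrable M ν)
    (h : ∀ᵐ x ∂ν, ‖F x - G x‖ ≤ M x) :
    ‖(∫ x, F x ∂ν) - ∫ x, G x ∂ν‖ ≤ ∫ x, M x ∂ν := by
  have hsub : Integrable (F - G) ν := Integrable.mono' hM (hF.sub hG.aestronglyMeasurable) h
  have hF_int : Integrable F ν := by simpa only [sub_add_cancel] using hsub.add hG
  rw [← integral_sub hF_int hG]
  exact norm_integral_le_of_norm_le hM h

lemma abs_rpow_mul_mul_pow_sub_le {A D l α w y : ℝ} (hp : 1 ≤ p) (hc : 0 < c) (hcl : c ≤ l)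
    (hD : 0 ≤ D) (hx : 0 < x) (hm : 2 ≤ m) (hα : 4 * |α| ≤ 3 * (c * m))
    (hw : |w - 1| ≤ A * x * exp (α * x)) (hy : |y| ≤ exp (-(c * min x (x ^ p))))
    (hy_sub : |y - exp (-(l * x ^ p))| ≤ D * x * min x (x ^ p)) :
    |x ^ (b - 1) * w * y ^ m - x ^ (b - 1) * exp (-(l * m) * x ^ p)| ≤
      (A * exp |α| + 4 / c * D) * laplaceMajorant b (c / 4) p m x := by
  have hμ : 0 ≤ min x (x ^ p) := le_min hx.le (rpow_nonneg hx.le p)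
  have hz : |exp (-(l * x ^ p))| ≤ exp (-(c * min x (x ^ p))) := by
    rw [abs_exp, exp_le_exp, neg_le_neg_iff]
    exact mul_le_mul hcl (min_le_right _ _) hμ (hc.le.trans hcl)
  have hpow : exp (-(l * x ^ p)) ^ m = exp (-(l * m) * x ^ p) := by
    rw [← exp_nat_mul]
    ring_nf
  have hA : 0 ≤ A :=
    nonneg_of_mul_nonneg_left (nonneg_of_mul_nonneg_left ((abs_nonneg _).trans hw) (exp_pos _)) hx
  calc |x ^ (b - 1) * w * y ^ m - x ^ (b - 1) * exp (-(l * m) * x ^ p)|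
      = x ^ (b - 1) * |w * y ^ m - exp (-(l * x ^ p)) ^ m| := by
        rw [hpow, mul_assoc, ← mul_sub, abs_mul, abs_of_pos (rpow_pos_of_pos hx _)]
    _ ≤ x ^ (b - 1) *
          ((A * exp |α| + 4 / c * D) * (x * exp (-(c / 4 * m * min x (x ^ p))))) := by
        gcongr
        exact abs_mul_pow_sub_pow_le hc hD hx.le (le_one_add_min_rpow hp hx.le) hμ hm hα hw hy hz
          hy_sub
    _ = (A * exp |α| + 4 / c * D) * (x ^ b * exp (-(c / 4 * m * min x (x ^ p)))) := by
        rw [rpow_sub_one hx.ne']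
        field_simp
    _ ≤ (A * exp |α| + 4 / c * D) * laplaceMajorant b (c / 4) p m x := by
        gcongr
        exact rpow_mul_exp_neg_mul_min_le_laplaceMajorant hx.le

theorem isBigO_integral_rpow_mul_mul_pow_sub {A D l α : ℝ} {g φ : ℝ → ℝ}
    (hb : 0 < b) (hp : 1 ≤ p) (hc : 0 < c) (hcl : c ≤ l)
    (hg_meas : AEStronglyMeasurable g (volume.restrict (Ioi 0)))
    (hφ_meas : AEStronglyMeasurable φ (volume.restrict (Ioi 0)))
    (hg : ∀ x, 0 < x → |g x - 1| ≤ A * x * exp (α * x))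
    (hφ : ∀ x, 0 < x → |φ x| ≤ exp (-(c * min x (x ^ p))))
    (hφ_sub : ∀ x, 0 < x → |φ x - exp (-(l * x ^ p))| ≤ D * x * min x (x ^ p)) :
    (fun m : ℕ => (∫ x in Ioi (0 : ℝ), x ^ (b - 1) * g x * φ x ^ m) -
        l ^ (-(b / p)) * Gamma (b / p) / p * (m : ℝ) ^ (-(b / p)))
      =O[atTop] fun m : ℕ => (m : ℝ) ^ (-((b + 1) / p)) := by
  have hp0 : 0 < p := one_pos.trans_le hp
  have hl : 0 < l := hc.trans_le hcl
  have hD : 0 ≤ D := by simpa using (abs_nonneg _).trans (hφ_sub 1 one_pos)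
  refine IsBigO.trans (IsBigO.of_bound (A * exp |α| + 4 / c * D) ?_)
    (isBigO_integral_laplaceMajorant (by linarith) (by positivity : 0 < c / 4) hp)
  filter_upwards [eventually_ge_atTop 2,
    tendsto_natCast_atTop_atTop.eventually_ge_atTop (4 * |α| / (3 * c))] with m hm hαm
  have hm0 : 0 < m := by omega
  have hα : 4 * |α| ≤ 3 * (c * m) := by
    rw [div_le_iff₀ (by positivity)] at hαm
    linarith
  have hmain : ∫ x in Ioi (0 : ℝ), x ^ (b - 1) * exp (-(l * m) * x ^ p) =
      l ^ (-(b / p)) * Gamma (b / p) / p * (m : ℝ) ^ (-(b / p)) := by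
    rw [integral_rpow_mul_exp_neg_mul_rpow hp0 (by linarith) (by positivity), sub_add_cancel,
      neg_div, mul_rpow hl.le m.cast_nonneg]
    ring
  have hmajorant : 0 ≤ ∫ x in Ioi (0 : ℝ), laplaceMajorant b (c / 4) p m x :=
    setIntegral_nonneg measurableSet_Ioi fun x (hx : 0 < x) => by
      rw [laplaceMajorant]; positivity
  rw [← hmain, norm_of_nonneg hmajorant, ← integral_const_mul]
  exact norm_integral_sub_integral_le_of_norm_sub_le
    (((measurable_id.pow_const (b - 1)).aestronglyMeasurable.mul hg_meas).mul (hφ_meas.pow m))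
    (integrableOn_rpow_mul_exp_neg_mul_rpow (by linarith) hp0 (by positivity))
    ((integrableOn_laplaceMajorant (by linarith) (by positivity) hp0 hm0).const_mul _)
    (ae_restrict_of_forall_mem measurableSet_Ioi fun x hx =>
      abs_rpow_mul_mul_pow_sub_le hp hc hcl hD hx hm hα (hg x hx) (hφ x hx) (hφ_sub x hx))

end LaplaceMethod

section RegUpperGamma

/-- The regularized upper incomplete gamma function `Q(k, x) = Γ(k, x) / Γ(k)`, the survival
function of the Gamma(`k`, 1) distribution on `x ≥ 0`. -/
noncomputable def regUpperGamma (k : ℕ) (x : ℝ) : ℝ :=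
  upperGamma k x / (Nat.factorial (k - 1) : ℝ)

variable {k : ℕ} {x : ℝ}

lemma integrableOn_pow_mul_exp_neg_mul_Ioi (n : ℕ) {s : ℝ} (hs : 0 < s) (hx : 0 ≤ x) :
    IntegrableOn (fun t : ℝ => t ^ n * exp (-(s * t))) (Ioi x) := by
  have h := integrableOn_rpow_mul_exp_neg_mul_rpow (p := 1) (s := n)
    (neg_one_lt_zero.trans_le n.cast_nonneg) one_pos hs
  simp only [rpow_natCast, rpow_one, neg_mul] at h
  exact h.mono_set (Ioi_subset_Ioi hx)

lemma integrableOn_pow_mul_exp_neg_Ioi (n : ℕ) (hx : 0 ≤ x) :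
    IntegrableOn (fun t : ℝ => t ^ n * exp (-t)) (Ioi x) := by
  simpa only [one_mul] using integrableOn_pow_mul_exp_neg_mul_Ioi n one_pos hx

lemma integral_pow_mul_exp_neg_mul_Ioi_zero (n : ℕ) {s : ℝ} (hs : 0 < s) :
    ∫ t in Ioi (0 : ℝ), t ^ n * exp (-(s * t)) = n.factorial / s ^ (n + 1) := by
  have h := integral_rpow_mul_exp_neg_mul_Ioi (a := n + 1) (by positivity) hs
  simp only [add_sub_cancel_right, rpow_natCast, Gamma_nat_eq_factorial] at h
  rw [h, ← Nat.cast_succ, rpow_natCast, one_div, inv_pow, inv_mul_eq_div]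

lemma pow_div_factorial_eq_integral_div (hk : 1 ≤ k) (x : ℝ) :
    x ^ k / k.factorial = (∫ t in (0 : ℝ)..x, t ^ (k - 1)) / (k - 1).factorial := by
  obtain ⟨n, rfl⟩ := Nat.exists_eq_add_of_le' hk
  simp [integral_pow, Nat.factorial_succ, div_div]

lemma regUpperGamma_eq_one_sub (k : ℕ) (hx : 0 ≤ x) :
    regUpperGamma k x =
      1 - (∫ t in (0 : ℝ)..x, t ^ (k - 1) * exp (-t)) / (k - 1).factorial := by
  have hsplit := intervalIntegral.integral_Ioi_sub_Ioi
    (integrableOn_pow_mul_exp_neg_Ioi (k - 1) le_rfl) hx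
  have hzero := integral_pow_mul_exp_neg_mul_Ioi_zero (k - 1) one_pos
  simp only [one_mul, one_pow, div_one] at hzero
  rw [← hsplit, hzero, regUpperGamma, upperGamma]
  field_simp
  ring

lemma continuousOn_regUpperGamma (k : ℕ) : ContinuousOn (regUpperGamma k) (Ici 0) := by
  have hcont : Continuous fun x : ℝ =>
      1 - (∫ t in (0 : ℝ)..x, t ^ (k - 1) * exp (-t)) / (k - 1).factorial :=
    continuous_const.sub ((intervalIntegral.continuous_primitive
      (fun _ _ => Continuous.intervalIntegrable (by fun_prop) _ _) 0).div_const _)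
  exact hcont.continuousOn.congr fun _ hx => regUpperGamma_eq_one_sub k hx

lemma regUpperGamma_nonneg (k : ℕ) (hx : 0 ≤ x) : 0 ≤ regUpperGamma k x := by
  refine div_nonneg (setIntegral_nonneg measurableSet_Ioi fun t ht => ?_) (by positivity)
  have : 0 < t := hx.trans_lt ht
  positivity

lemma antitoneOn_regUpperGamma (k : ℕ) : AntitoneOn (regUpperGamma k) (Ici 0) := by
  intro x hx y _ hxy
  refine div_le_div_of_nonneg_right ?_ (by positivity)
  refine setIntegral_mono_set (integrableOn_pow_mul_exp_neg_Ioi _ hx) ?_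
    (Ioi_subset_Ioi hxy).eventuallyLE
  refine ae_restrict_of_forall_mem measurableSet_Ioi fun t ht => ?_
  have : 0 < t := lt_of_le_of_lt hx ht
  simp only [Pi.zero_apply]
  positivity

lemma one_sub_pow_div_factorial_le_regUpperGamma (hk : 1 ≤ k) (hx : 0 ≤ x) :
    1 - x ^ k / k.factorial ≤ regUpperGamma k x := by
  rw [regUpperGamma_eq_one_sub k hx, pow_div_factorial_eq_integral_div hk]
  gcongr
  refine intervalIntegral.integral_mono_on hx (Continuous.intervalIntegrable (by fun_prop) _ _)
    (Continuous.intervalIntegrable (by fun_prop) _ _) fun t ht => ?_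
  exact mul_le_of_le_one_right (pow_nonneg ht.1 _) (exp_le_one_iff.2 (neg_nonpos.2 ht.1))

lemma regUpperGamma_le_one_sub_exp_neg_mul (hk : 1 ≤ k) (hx : 0 ≤ x) :
    regUpperGamma k x ≤ 1 - exp (-x) * (x ^ k / k.factorial) := by
  rw [regUpperGamma_eq_one_sub k hx, pow_div_factorial_eq_integral_div hk, ← mul_div_assoc,
    ← intervalIntegral.integral_const_mul]
  gcongr
  refine intervalIntegral.integral_mono_on hx (Continuous.intervalIntegrable (by fun_prop) _ _)
    (Continuous.intervalIntegrable (by fun_prop) _ _) fun t ht => ?_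
  rw [mul_comm]
  exact mul_le_mul_of_nonneg_left (exp_le_exp.2 (neg_le_neg ht.2)) (pow_nonneg ht.1 _)

lemma regUpperGamma_le_exp_neg_div_pow (hk : 1 ≤ k) (hx : 0 ≤ x) {s : ℝ} (hs : 0 < s)
    (hs1 : s ≤ 1) : regUpperGamma k x ≤ exp (-((1 - s) * x)) / s ^ k := by
  have hint : IntegrableOn (fun t : ℝ => t ^ (k - 1) * exp (-(s * t))) (Ioi 0) :=
    integrableOn_pow_mul_exp_neg_mul_Ioi (k - 1) hs le_rfl
  rw [regUpperGamma, div_le_iff₀ (by positivity)]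
  calc upperGamma k x
      ≤ ∫ t in Ioi x, exp (-((1 - s) * x)) * (t ^ (k - 1) * exp (-(s * t))) := by
        refine setIntegral_mono_on (integrableOn_pow_mul_exp_neg_Ioi _ hx)
          ((hint.mono_set (Ioi_subset_Ioi hx)).const_mul _) measurableSet_Ioi fun t ht => ?_
        have ht0 : 0 < t := hx.trans_lt ht
        have hxt : (1 - s) * x ≤ (1 - s) * t :=
          mul_le_mul_of_nonneg_left (le_of_lt ht) (sub_nonneg.2 hs1)
        rw [mul_left_comm, ← exp_add]
        gcongr
        linarith
    _ = exp (-((1 - s) * x)) * ∫ t in Ioi x, t ^ (k - 1) * exp (-(s * t)) :=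
        integral_const_mul _ _
    _ ≤ exp (-((1 - s) * x)) * ∫ t in Ioi (0 : ℝ), t ^ (k - 1) * exp (-(s * t)) := by
        gcongr
        refine ae_restrict_of_forall_mem measurableSet_Ioi fun t (ht : 0 < t) => ?_
        simp only [Pi.zero_apply]
        positivity
    _ = exp (-((1 - s) * x)) / s ^ k * (k - 1).factorial := by
        rw [integral_pow_mul_exp_neg_mul_Ioi_zero _ hs, Nat.sub_add_cancel hk]
        ring

lemma regUpperGamma_le_exp_neg_of_le_one (hk : 1 ≤ k) (hx : 0 ≤ x) (hx1 : x ≤ 1) :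
    regUpperGamma k x ≤ exp (-(exp (-1) / k.factorial * x ^ k)) :=
  calc regUpperGamma k x
      ≤ 1 - exp (-x) * (x ^ k / k.factorial) := regUpperGamma_le_one_sub_exp_neg_mul hk hx
    _ ≤ 1 - exp (-1) * (x ^ k / k.factorial) := by gcongr
    _ = 1 - exp (-1) / k.factorial * x ^ k := by ring
    _ ≤ exp (-(exp (-1) / k.factorial * x ^ k)) := one_sub_le_exp_neg _

lemma regUpperGamma_le_exp_neg_of_four_mul_le (hk : 1 ≤ k) (hx : 4 * k ≤ x) :
    regUpperGamma k x ≤ exp (-(x / 4)) := by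
  have hx0 : 0 ≤ x := le_trans (by positivity) hx
  have htwo : (2 : ℝ) ≤ exp 1 := by linarith [add_one_le_exp (1 : ℝ)]
  calc regUpperGamma k x
      ≤ exp (-((1 - 1 / 2) * x)) / (1 / 2) ^ k :=
        regUpperGamma_le_exp_neg_div_pow hk hx0 (by norm_num) (by norm_num)
    _ = 2 ^ k * exp (-(x / 2)) := by rw [one_div, inv_pow, div_inv_eq_mul]; ring_nf
    _ ≤ exp 1 ^ k * exp (-(x / 2)) := by gcongr
    _ = exp (k - x / 2) := by rw [← exp_nat_mul, ← exp_add]; ring_nf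
    _ ≤ exp (-(x / 4)) := exp_le_exp.2 (by linarith)

lemma exists_regUpperGamma_le_exp_neg_mul_min (hk : 1 ≤ k) :
    ∃ c : ℝ, 0 < c ∧ c ≤ 1 / k.factorial ∧
      ∀ x, 0 ≤ x → regUpperGamma k x ≤ exp (-(c * min x (x ^ k))) := by
  have hk' : (1 : ℝ) ≤ k := by exact_mod_cast hk
  have hfact : (1 : ℝ) ≤ k.factorial := by exact_mod_cast k.factorial_pos
  set c₀ : ℝ := exp (-1) / k.factorial with hc₀
  have hc₀_pos : 0 < c₀ := by positivity
  have hc₀_le : c₀ ≤ 1 / k.factorial := by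
    rw [hc₀]; gcongr; exact exp_le_one_iff.2 (by norm_num)
  have hc₀_le_one : c₀ ≤ 1 := hc₀_le.trans (div_le_one_of_le₀ hfact (by positivity))
  have hc_le : c₀ / (4 * k) ≤ c₀ / 4 := by gcongr; linarith
  refine ⟨c₀ / (4 * k), by positivity, by linarith, fun x hx => ?_⟩
  rcases le_total x 1 with hx1 | hx1
  · refine (regUpperGamma_le_exp_neg_of_le_one hk hx hx1).trans ?_
    rw [exp_le_exp, neg_le_neg_iff]
    exact mul_le_mul (by linarith) (min_le_right _ _) (by positivity) hc₀_pos.le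
  have hmin : c₀ / (4 * k) * min x (x ^ k) ≤ c₀ / (4 * k) * x := by
    gcongr; exact min_le_left _ _
  rcases le_total x (4 * k) with hxk | hxk
  · refine (antitoneOn_regUpperGamma k (mem_Ici.2 zero_le_one) hx hx1).trans ?_
    refine (regUpperGamma_le_exp_neg_of_le_one hk zero_le_one le_rfl).trans ?_
    rw [one_pow, mul_one, exp_le_exp, neg_le_neg_iff]
    calc c₀ / (4 * k) * min x (x ^ k) ≤ c₀ / (4 * k) * (4 * k) := hmin.trans (by gcongr)
      _ = c₀ := by field_simp
  · refine (regUpperGamma_le_exp_neg_of_four_mul_le hk hxk).trans ?_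
    rw [exp_le_exp, neg_le_neg_iff]
    calc c₀ / (4 * k) * min x (x ^ k) ≤ 1 / 4 * x := hmin.trans (by gcongr; linarith)
      _ = x / 4 := by ring

lemma abs_regUpperGamma_sub_exp_le (hk : 1 ≤ k) (hx : 0 ≤ x) :
    |regUpperGamma k x - exp (-(x ^ k / k.factorial))| ≤ x * min x (x ^ k) := by
  have hlower := one_sub_pow_div_factorial_le_regUpperGamma hk hx
  have hupper := regUpperGamma_le_one_sub_exp_neg_mul hk hx
  set u : ℝ := x ^ k / k.factorial
  have hu0 : 0 ≤ u := by positivity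
  rcases le_total x 1 with hx1 | hx1
  · have hux : u ≤ x ^ k := div_le_self (by positivity) (by exact_mod_cast k.factorial_pos)
    have hxk : x ^ k ≤ x := pow_le_of_le_one hx hx1 (by omega)
    have hxu : x * u ≤ x * x ^ k := by gcongr
    have hQ : regUpperGamma k x ≤ 1 - u + x * x ^ k := by
      have := mul_le_mul_of_nonneg_right (one_sub_le_exp_neg x) hu0
      linarith
    have hexp : exp (-u) ≤ 1 - u + x * x ^ k := by
      have hu1 : |-u| ≤ 1 := by rw [abs_neg, abs_of_nonneg hu0]; linarith
      have hquad := (abs_le.1 (abs_exp_sub_one_sub_id_le hu1)).2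
      have : u * u ≤ x * u := by gcongr; linarith
      linarith
    rw [min_eq_right hxk, abs_sub_le_iff]
    constructor <;> linarith [one_sub_le_exp_neg u]
  · have hQ0 := regUpperGamma_nonneg k hx
    have hQ1 : regUpperGamma k x ≤ 1 := hupper.trans (sub_le_self _ (by positivity))
    have hexp : exp (-u) ≤ 1 := exp_le_one_iff.2 (neg_nonpos.2 hu0)
    have hmin : 1 ≤ min x (x ^ k) := le_min hx1 (one_le_pow₀ hx1)
    have hone : 1 ≤ x * min x (x ^ k) := one_le_mul_of_one_le_of_one_le hx1 hmin
    rw [abs_sub_le_iff]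
    constructor <;> linarith [exp_pos (-u)]

end RegUpperGamma

lemma abs_exp_sub_one_le_abs_mul_exp_abs (y : ℝ) : |exp y - 1| ≤ |y| * exp |y| := by
  have h := Complex.norm_exp_sub_sum_le_norm_mul_exp y 1
  simp only [Finset.range_one, Finset.sum_singleton, pow_zero, Nat.factorial_zero, Nat.cast_one,
    div_one, pow_one, Complex.norm_real, norm_eq_abs] at h
  exact_mod_cast h

lemma isBigO_integral_rpow_mul_exp_mul_regUpperGamma_pow_sub {k : ℕ} (hk : 1 ≤ k) (a : ℝ) {b : ℝ}
    (hb : 0 < b) :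
    (fun m : ℕ => (∫ x in Ioi (0 : ℝ), x ^ (b - 1) * exp (-a * x) * regUpperGamma k x ^ m) -
        (k.factorial : ℝ) ^ (b / k) * Gamma (b / k) / k * (m : ℝ) ^ (-(b / k)))
      =O[atTop] fun m : ℕ => (m : ℝ) ^ (-((b + 1) / k)) := by
  obtain ⟨c, hc, hcl, hQ⟩ := exists_regUpperGamma_le_exp_neg_mul_min hk
  have hamplitude (x : ℝ) (hx : 0 < x) : |exp (-a * x) - 1| ≤ |a| * x * exp (|a| * x) := by
    simpa [abs_mul, abs_of_pos hx] using abs_exp_sub_one_le_abs_mul_exp_abs (-a * x)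
  have hQ_meas : AEStronglyMeasurable (regUpperGamma k) (volume.restrict (Ioi 0)) :=
    ((continuousOn_regUpperGamma k).mono Ioi_subset_Ici_self).aestronglyMeasurable
      measurableSet_Ioi
  have h := isBigO_integral_rpow_mul_mul_pow_sub (p := k) (D := 1) hb (by exact_mod_cast hk) hc hcl
    (by fun_prop) hQ_meas hamplitude
    (fun x hx => by
      rw [abs_of_nonneg (regUpperGamma_nonneg k hx.le), rpow_natCast]
      exact hQ x hx.le)
    (fun x hx => by
      rw [rpow_natCast, one_mul, one_div_mul_eq_div]
      exact abs_regUpperGamma_sub_exp_le hk hx.le)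
  rwa [one_div, inv_rpow (by positivity), ← rpow_neg (by positivity), neg_neg] at h

lemma exists_abs_le_mul_rpow_neg_mul_of_isBigO {f h : ℕ → ℝ} {r s : ℝ} (hrs : r ≤ s)
    (hh : ∀ m, 1 ≤ m → 0 < h m) (hf : f =O[atTop] fun m : ℕ => (m : ℝ) ^ (-s) * h m) :
    ∃ C : ℝ, ∀ m : ℕ, 1 ≤ m → |f m| ≤ C * (m : ℝ) ^ (-r) * h m := by
  obtain ⟨C, -, hC⟩ :=
    bound_of_isBigO_nat_atTop (hf.trans ((isBigO_natCast_rpow_neg hrs).mul (isBigO_refl h atTop)))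
  refine ⟨C, fun m hm => ?_⟩
  have hpos : 0 < (m : ℝ) ^ (-r) * h m :=
    mul_pos (rpow_pos_of_pos (by exact_mod_cast hm) _) (hh m hm)
  simpa only [norm_eq_abs, abs_of_pos hpos, mul_assoc] using hC hpos.ne'

lemma factorial_rpow_mul_Gamma_div_pos {k : ℕ} (hk : 1 ≤ k) {b : ℝ} (hb : 0 < b) :
    0 < (k.factorial : ℝ) ^ (b / k) * Gamma (b / k) / k := by
  have := Gamma_pos_of_pos (s := b / k) (by positivity)
  positivity

theorem stmt1_general (k : ℕ) (hk : 1 ≤ k) (a b : ℝ) (hb : 0 < b) :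
    (fun m : ℕ =>
      (∫ x in Ioi (0 : ℝ),
          x ^ (b - 1) * exp (-a * x) * (upperGamma k x / (Nat.factorial (k - 1) : ℝ)) ^ m)
        - (Nat.factorial k : ℝ) ^ (b / k) * Gamma (b / k) / k * (m : ℝ) ^ (-(b / k)))
      =O[atTop] fun m : ℕ => (m : ℝ) ^ (-(1 / (k : ℝ))) *
        ((Nat.factorial k : ℝ) ^ (b / k) * Gamma (b / k) / k * (m : ℝ) ^ (-(b / k))) := by
  set A : ℝ := (k.factorial : ℝ) ^ (b / k) * Gamma (b / k) / k
  have hA : 0 < A := factorial_rpow_mul_Gamma_div_pos hk hb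
  have herror : (fun m : ℕ => (m : ℝ) ^ (-((b + 1) / k))) =ᶠ[atTop]
      fun m : ℕ => A⁻¹ * ((m : ℝ) ^ (-(1 / (k : ℝ))) * (A * (m : ℝ) ^ (-(b / k)))) := by
    filter_upwards [eventually_gt_atTop 0] with m hm
    rw [mul_left_comm _ A, inv_mul_cancel_left₀ hA.ne', ← rpow_add (by exact_mod_cast hm)]
    ring_nf
  exact (isBigO_integral_rpow_mul_exp_mul_regUpperGamma_pow_sub hk a hb).trans
    (herror.trans_isBigO ((isBigO_refl _ _).const_mul_left _))

theorem stmt1 (k : ℕ) (hk : 1 ≤ k) (a b : ℝ) (ha : 0 ≤ a) (hb : 1 ≤ b) :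
    ∃ C : ℝ, ∀ m : ℕ, 1 ≤ m →
      |(∫ x in Set.Ioi (0 : ℝ),
            x ^ (b - 1) * Real.exp (-a * x) * (upperGamma k x / (Nat.factorial (k - 1) : ℝ)) ^ m)
          - (Nat.factorial k : ℝ) ^ (b / k) * Real.Gamma (b / k) / k * (m : ℝ) ^ (-(b / k))|
        ≤ C * (m : ℝ) ^ (-(1 / (2 * (k : ℝ)))) *
            ((Nat.factorial k : ℝ) ^ (b / k) * Real.Gamma (b / k) / k * (m : ℝ) ^ (-(b / k))) := by
  have hb0 : 0 < b := one_pos.trans_le hb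
  refine exists_abs_le_mul_rpow_neg_mul_of_isBigO ?_ (fun m hm => ?_) (stmt1_general k hk a b hb0)
  · gcongr
    linarith [(Nat.cast_nonneg k : (0 : ℝ) ≤ k)]
  · exact mul_pos (factorial_rpow_mul_Gamma_div_pos hk hb0) (by positivity)
end

section
/- For a > 0, b > 0 and integer k ≥ 2, the double integral ξ_k(a,b) := ∫_0^∞ ∫_y^∞ exp(-a x^k/k! - b y^k/k!) dx dy equals (Γ(2/k)/k) (k!/a)^{2/k} · F(2/k, 1/k; 1 + 1/k; -b/a), where F denotes the Gauss hypergeometric function. -/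
open MeasureTheory Real Set

/-- The Gauss hypergeometric function `₂F₁(a, b; c; z)`, given (for `c > b > 0` and `z < 1`)
by Euler's integral representation. -/
noncomputable def hypF (a b c z : ℝ) : ℝ :=
  (Real.Gamma c / (Real.Gamma b * Real.Gamma (c - b))) *
    ∫ t in Set.Ioo (0 : ℝ) 1, t ^ (b - 1) * (1 - t) ^ (c - b - 1) * (1 - z * t) ^ (-a)

/-!
On the sector `0 < y < x` use the coordinates `(y, t)` with `x = y * t`, `1 < t`: the homogeneous
form `a * x ^ p + b * y ^ p` becomes `(a * t ^ p + b) * y ^ p`. After Tonelli, the integral over `y`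
is a Gamma integral, which leaves `∫ t in Ioi 1, (a * t ^ p + b) ^ (-(2 / p))`; the substitution
`t ↦ t ^ (-p)` identifies this with Euler's integral.
-/

section Substitutions

variable {E : Type*} [NormedAddCommGroup E] [NormedSpace ℝ E]

theorem setIntegral_Ioi_eq_smul_setIntegral_Ioi_one (f : ℝ → E) {y : ℝ} (hy : 0 < y) :
    ∫ x in Ioi y, f x = y • ∫ t in Ioi 1, f (y * t) := by
  rw [integral_comp_mul_left_Ioi f 1 hy, mul_one, smul_inv_smul₀ hy.ne']

theorem setIntegral_Ioo_zero_one_eq_setIntegral_Ioi_one_rpow_neg (f : ℝ → E) {p : ℝ} (hp : 0 < p) :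
    ∫ t in Ioo 0 1, f t = ∫ t in Ioi 1, (p * t ^ (-p - 1)) • f (t ^ (-p)) := by
  have mem_iff {t : ℝ} (ht : 0 < t) : t ^ (-p) ∈ Iio 1 ↔ t ∈ Ioi 1 := by
    rw [mem_Iio, mem_Ioi, rpow_neg ht.le, inv_lt_one₀ (rpow_pos_of_pos ht p),
      one_lt_rpow_iff_of_pos ht]
    grind
  calc ∫ t in Ioo 0 1, f t
      = ∫ t in Ioi 0, (Iio 1).indicator f t := by
        rw [setIntegral_indicator measurableSet_Iio, Ioi_inter_Iio]
    _ = ∫ t in Ioi 0, (|-p| * t ^ (-p - 1)) • (Iio 1).indicator f (t ^ (-p)) :=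
        (integral_comp_rpow_Ioi _ (neg_ne_zero.mpr hp.ne')).symm
    _ = ∫ t in Ioi 0, (Ioi 1).indicator (fun t ↦ (p * t ^ (-p - 1)) • f (t ^ (-p))) t := by
        refine setIntegral_congr_fun measurableSet_Ioi fun t (ht : 0 < t) ↦ ?_
        by_cases h : t ∈ Ioi 1
        · simp only [indicator_of_mem h, indicator_of_mem ((mem_iff ht).mpr h), abs_neg,
            abs_of_pos hp]
        · simp only [indicator_of_notMem h, indicator_of_notMem (mt (mem_iff ht).mp h), smul_zero]
    _ = ∫ t in Ioi 1, (p * t ^ (-p - 1)) • f (t ^ (-p)) := by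
        rw [setIntegral_indicator measurableSet_Ioi, Ioi_inter_Ioi, max_eq_right zero_le_one]

end Substitutions

section Hypergeometric

theorem hypF_one_add (α z : ℝ) {β : ℝ} (hβ : 0 < β) :
    hypF α β (1 + β) z = β * ∫ t in Ioo 0 1, t ^ (β - 1) * (1 - z * t) ^ (-α) := by
  have hΓ : Gamma β ≠ 0 := (Gamma_pos_of_pos hβ).ne'
  simp only [hypF, add_sub_cancel_right, sub_self, rpow_zero, mul_one, Gamma_one]
  rw [add_comm, Gamma_add_one hβ.ne', mul_div_cancel_right₀ β hΓ]

theorem hypF_one_div_eq_setIntegral_Ioi (α : ℝ) {p z : ℝ} (hp : 0 < p) (hz : z ≤ 1) :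
    hypF α (1 / p) (1 + 1 / p) z = ∫ t in Ioi 1, t ^ (p * α - 2) * (t ^ p - z) ^ (-α) := by
  rw [hypF_one_add α z (one_div_pos.mpr hp),
    setIntegral_Ioo_zero_one_eq_setIntegral_Ioi_one_rpow_neg _ hp, ← integral_const_mul]
  refine setIntegral_congr_fun measurableSet_Ioi fun t (ht : 1 < t) ↦ ?_
  have ht₀ : 0 < t := one_pos.trans ht
  have h_sub : 0 ≤ t ^ p - z := by linarith [one_lt_rpow ht hp]
  have h_factor : 1 - z * t ^ (-p) = t ^ (-p) * (t ^ p - z) := by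
    rw [mul_sub, ← rpow_add ht₀, neg_add_cancel, rpow_zero, mul_comm z]
  have h_pow : t ^ (-p - 1) * (t ^ (-p)) ^ (1 / p - 1) * (t ^ (-p)) ^ (-α) = t ^ (p * α - 2) := by
    simp only [← rpow_mul ht₀.le, ← rpow_add ht₀]
    congr 1
    field_simp
    ring
  simp only [smul_eq_mul, h_factor, mul_rpow (rpow_nonneg ht₀.le _) h_sub, ← h_pow]
  field_simp

end Hypergeometric

section GammaIntegral

variable {p : ℝ}

theorem integral_mul_exp_neg_mul_rpow (hp : 0 < p) {c : ℝ} (hc : 0 < c) :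
    ∫ y in Ioi 0, y * exp (-c * y ^ p) = Gamma (2 / p) / p * c ^ (-(2 / p)) := by
  have h := integral_rpow_mul_exp_neg_mul_rpow hp (q := 1) (by norm_num) hc
  simp only [rpow_one] at h
  rw [h, one_add_one_eq_two, neg_div]
  ring

theorem integrableOn_mul_exp_neg_mul_rpow (hp : 0 < p) {c : ℝ} (hc : 0 < c) :
    IntegrableOn (fun y ↦ y * exp (-c * y ^ p)) (Ioi 0) := by
  refine .of_integral_ne_zero ?_
  rw [integral_mul_exp_neg_mul_rpow hp hc]
  have : 0 < Gamma (2 / p) := Gamma_pos_of_pos (by positivity)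
  positivity

variable {α : Type*} [MeasurableSpace α] {μ : Measure α} [SFinite μ] {g : α → ℝ}

theorem integrable_prod_mul_exp_neg_mul_rpow (hp : 0 < p) (hg : AEMeasurable g μ)
    (hg_pos : ∀ᵐ s ∂μ, 0 < g s) (hg_int : Integrable (fun s ↦ g s ^ (-(2 / p))) μ) :
    Integrable (fun z : ℝ × α ↦ z.1 * exp (-g z.2 * z.1 ^ p))
      ((volume.restrict (Ioi 0)).prod μ) := by
  have h_meas : AEMeasurable (fun z : ℝ × α ↦ z.1 * exp (-g z.2 * z.1 ^ p))
      ((volume.restrict (Ioi 0)).prod μ) := by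
    have := hg.comp_snd (μ := volume.restrict (Ioi (0 : ℝ)))
    fun_prop
  refine (integrable_prod_iff' h_meas.aestronglyMeasurable).mpr ⟨?_, ?_⟩
  · filter_upwards [hg_pos] with s hs using integrableOn_mul_exp_neg_mul_rpow hp hs
  · refine (hg_int.const_mul (Gamma (2 / p) / p)).congr ?_
    filter_upwards [hg_pos] with s hs
    rw [← integral_mul_exp_neg_mul_rpow hp hs]
    refine setIntegral_congr_fun measurableSet_Ioi fun y (hy : 0 < y) ↦ ?_
    exact (norm_of_nonneg (by positivity)).symm

theorem integral_integral_mul_exp_neg_mul_rpow (hp : 0 < p) (hg : AEMeasurable g μ)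
    (hg_pos : ∀ᵐ s ∂μ, 0 < g s) (hg_int : Integrable (fun s ↦ g s ^ (-(2 / p))) μ) :
    ∫ y in Ioi 0, ∫ s, y * exp (-g s * y ^ p) ∂μ
      = Gamma (2 / p) / p * ∫ s, g s ^ (-(2 / p)) ∂μ := by
  rw [integral_integral_swap (integrable_prod_mul_exp_neg_mul_rpow hp hg hg_pos hg_int),
    ← integral_const_mul]
  refine integral_congr_ae ?_
  filter_upwards [hg_pos] with s hs using integral_mul_exp_neg_mul_rpow hp hs

end GammaIntegral

section BinaryForm

variable {p a b : ℝ}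

theorem min_mul_rpow_le_mul_rpow_add (hp : 0 ≤ p) {t : ℝ} (ht : 1 ≤ t) :
    min a (a + b) * t ^ p ≤ a * t ^ p + b := by
  have h_one : 1 ≤ t ^ p := one_le_rpow ht hp
  rcases le_total 0 b with hb | hb
  · rw [min_eq_left (by linarith)]
    linarith
  · rw [min_eq_right (by linarith), add_mul]
    linarith [mul_le_mul_of_nonpos_left h_one hb]

theorem mul_rpow_add_pos (hp : 0 ≤ p) (ha : 0 < a) (hab : 0 < a + b) {t : ℝ} (ht : 1 ≤ t) :
    0 < a * t ^ p + b :=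
  (mul_pos (lt_min ha hab) (rpow_pos_of_pos (one_pos.trans_le ht) p)).trans_le
    (min_mul_rpow_le_mul_rpow_add hp ht)

theorem integrableOn_Ioi_one_mul_rpow_add_rpow_neg (hp : 0 ≤ p) (ha : 0 < a) (hab : 0 < a + b)
    {q : ℝ} (hpq : 1 < p * q) :
    IntegrableOn (fun t ↦ (a * t ^ p + b) ^ (-q)) (Ioi 1) := by
  have hq : 0 < q := pos_of_mul_pos_right (one_pos.trans hpq) hp
  have hm : 0 < min a (a + b) := lt_min ha hab
  have h_dom : IntegrableOn (fun t : ℝ ↦ min a (a + b) ^ (-q) * t ^ (-(p * q))) (Ioi 1) :=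
    (integrableOn_Ioi_rpow_of_lt (neg_lt_neg hpq) one_pos).const_mul _
  have h_meas : Measurable fun t : ℝ ↦ (a * t ^ p + b) ^ (-q) := by fun_prop
  refine h_dom.mono' h_meas.aestronglyMeasurable
    ((ae_restrict_mem measurableSet_Ioi).mono fun t (ht : 1 < t) ↦ ?_)
  have ht₀ : 0 < t := one_pos.trans ht
  calc ‖(a * t ^ p + b) ^ (-q)‖
      = (a * t ^ p + b) ^ (-q) :=
        norm_of_nonneg (rpow_nonneg (mul_rpow_add_pos hp ha hab ht.le).le _)
    _ ≤ (min a (a + b) * t ^ p) ^ (-q) :=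
        rpow_le_rpow_of_nonpos (by positivity) (min_mul_rpow_le_mul_rpow_add hp ht.le)
          (neg_nonpos.mpr hq.le)
    _ = min a (a + b) ^ (-q) * t ^ (-(p * q)) := by
        rw [mul_rpow hm.le (rpow_nonneg ht₀.le p), ← rpow_mul ht₀.le, mul_neg]

theorem setIntegral_Ioi_exp_neg_mul_rpow_sub {y : ℝ} (hy : 0 < y) :
    ∫ x in Ioi y, exp (-a * x ^ p - b * y ^ p)
      = ∫ t in Ioi 1, y * exp (-(a * t ^ p + b) * y ^ p) := by
  rw [setIntegral_Ioi_eq_smul_setIntegral_Ioi_one _ hy, smul_eq_mul, ← integral_const_mul]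
  refine setIntegral_congr_fun measurableSet_Ioi fun t (ht : 1 < t) ↦ ?_
  have h_hom : -a * (y * t) ^ p - b * y ^ p = -(a * t ^ p + b) * y ^ p := by
    rw [mul_rpow hy.le (one_pos.trans ht).le]
    ring
  simp only [h_hom]

theorem setIntegral_Ioi_one_mul_rpow_add_rpow_neg (hp : 0 < p) (ha : 0 < a) (hab : 0 < a + b) :
    ∫ t in Ioi 1, (a * t ^ p + b) ^ (-(2 / p))
      = a⁻¹ ^ (2 / p) * hypF (2 / p) (1 / p) (1 + 1 / p) (-b / a) := by
  have hz : -b / a ≤ 1 := (div_le_one ha).mpr (by linarith)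
  rw [hypF_one_div_eq_setIntegral_Ioi _ hp hz, ← integral_const_mul]
  refine setIntegral_congr_fun measurableSet_Ioi fun t (ht : 1 < t) ↦ ?_
  have h_sub : 0 ≤ t ^ p - -b / a := by linarith [one_lt_rpow ht hp]
  have h_factor : a * t ^ p + b = a * (t ^ p - -b / a) := by
    field_simp
    ring
  simp only [h_factor, mul_rpow ha.le h_sub, mul_div_cancel₀ _ hp.ne', sub_self, rpow_zero, one_mul,
    rpow_neg ha.le, inv_rpow ha.le]

end BinaryForm

theorem stmt2_general {p a b : ℝ} (hp : 0 < p) (ha : 0 < a) (hab : 0 < a + b) :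
    ∫ y in Ioi 0, ∫ x in Ioi y, exp (-a * x ^ p - b * y ^ p)
      = Gamma (2 / p) / p * a⁻¹ ^ (2 / p) * hypF (2 / p) (1 / p) (1 + 1 / p) (-b / a) := by
  have h_pos : ∀ᵐ t ∂volume.restrict (Ioi 1), 0 < a * t ^ p + b :=
    (ae_restrict_mem measurableSet_Ioi).mono fun t ht ↦ mul_rpow_add_pos hp.le ha hab (le_of_lt ht)
  have h_int : IntegrableOn (fun t ↦ (a * t ^ p + b) ^ (-(2 / p))) (Ioi 1) :=
    integrableOn_Ioi_one_mul_rpow_add_rpow_neg hp.le ha hab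
      (by rw [mul_div_cancel₀ _ hp.ne']; exact one_lt_two)
  calc ∫ y in Ioi 0, ∫ x in Ioi y, exp (-a * x ^ p - b * y ^ p)
      = ∫ y in Ioi 0, ∫ t in Ioi 1, y * exp (-(a * t ^ p + b) * y ^ p) :=
        setIntegral_congr_fun measurableSet_Ioi fun y hy ↦ setIntegral_Ioi_exp_neg_mul_rpow_sub hy
    _ = Gamma (2 / p) / p * ∫ t in Ioi 1, (a * t ^ p + b) ^ (-(2 / p)) :=
        integral_integral_mul_exp_neg_mul_rpow hp (by fun_prop) h_pos h_int
    _ = Gamma (2 / p) / p * a⁻¹ ^ (2 / p) * hypF (2 / p) (1 / p) (1 + 1 / p) (-b / a) := by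
        rw [setIntegral_Ioi_one_mul_rpow_add_rpow_neg hp ha hab, mul_assoc]

theorem stmt2 (k : ℕ) (hk : 2 ≤ k) (a b : ℝ) (ha : 0 < a) (hb : 0 < b) :
    (∫ y in Set.Ioi (0 : ℝ), ∫ x in Set.Ioi y,
        Real.exp (-a * x ^ k / (Nat.factorial k : ℝ) - b * y ^ k / (Nat.factorial k : ℝ)))
      = Real.Gamma (2 / k) / k * ((Nat.factorial k : ℝ) / a) ^ ((2 : ℝ) / k) *
          hypF (2 / k) (1 / k) (1 + 1 / k) (-b / a) := by
  have hN : (0 : ℝ) < k.factorial := by positivity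
  simpa [← neg_div, div_mul_eq_mul_div, div_div_div_cancel_right₀ hN.ne'] using
    stmt2_general (p := k) (b := b / k.factorial) (by positivity) (div_pos ha hN) (by positivity)
end

section
/- Fix an integer k ≥ 2 and 1 ≤ r ≤ k-1. Let X_{n,r} = Σ_{i=0}^{n-1} p_{r,i} where p_{r,i} = ∫_0^∞ (x^{r-1}e^{-x}/Γ(r)) (Γ(k,x)/Γ(k))^i dx (the probability that node i+1 is an r-record on a path of n nodes). Then E[X_{n,r}] ~ η_{k,r} n^{1 - r/k} as n → ∞, where η_{k,r} = ((k!)^{r/k}/(k-r)) · Γ(r/k)/Γ(r). -/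
open MeasureTheory Real Set Filter

/-
A clock rings before `i` others only if it rings early, so `p_{r,i}` is governed by its integrand
near `0`, where the weight is `~ x^{r-1} / Γ(r)` and the survival function of `Gamma(k,1)` is
`1 - x^k / k! + o(x^k)`. The substitution `x = i^{-1/k} y` turns the `i`-th power of the latter
into `exp(-y^k / k!)` in the limit, whence (Laplace's method)
`i^{r/k} p_{r,i} → (k!)^{r/k} Γ(r/k) / (k Γ(r))`. Summation over `i < n` is the Stolz–Cesàro
theorem against the increments of `n^{1-r/k}`.
-/

open scoped Topology

section StolzCesaro

theorem tendsto_sum_range_div_sum_range {f g : ℕ → ℝ} {L : ℝ} (hg : ∀ i, 0 < g i)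
    (hg_top : Tendsto (fun n ↦ ∑ i ∈ Finset.range n, g i) atTop atTop)
    (h : Tendsto (fun n ↦ f n / g n) atTop (𝓝 L)) :
    Tendsto (fun n ↦ (∑ i ∈ Finset.range n, f i) / ∑ i ∈ Finset.range n, g i) atTop (𝓝 L) := by
  have h_diff : (fun i ↦ f i - L * g i) =o[atTop] g := by
    refine (Asymptotics.isLittleO_iff_tendsto fun i hi ↦ absurd hi (hg i).ne').2 ?_
    refine (tendsto_sub_nhds_zero_iff.2 h).congr fun n ↦ ?_
    rw [sub_div, mul_div_cancel_right₀ _ (hg n).ne']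
  refine tendsto_sub_nhds_zero_iff.1
    ((h_diff.sum_range (fun i ↦ (hg i).le) hg_top).tendsto_div_nhds_zero.congr' ?_)
  filter_upwards [hg_top.eventually_gt_atTop 0] with n hn
  rw [Finset.sum_sub_distrib, ← Finset.mul_sum, sub_div, mul_div_cancel_right₀ _ hn.ne']

theorem tendsto_rpow_mul_succ_rpow_sub_rpow (p : ℝ) :
    Tendsto (fun n : ℕ ↦ (n : ℝ) ^ (1 - p) * (((n + 1 : ℕ) : ℝ) ^ p - (n : ℝ) ^ p))
      atTop (𝓝 p) := by
  have h_deriv : HasDerivAt (fun x : ℝ ↦ x ^ p) p 1 := by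
    simpa using hasDerivAt_rpow_const (x := 1) (p := p) (Or.inl one_ne_zero)
  have h_inv : Tendsto (fun n : ℕ ↦ (n : ℝ)⁻¹) atTop (𝓝[>] 0) :=
    tendsto_inv_atTop_nhdsGT_zero.comp tendsto_natCast_atTop_atTop
  refine (h_deriv.tendsto_slope_zero_right.comp h_inv).congr' ?_
  filter_upwards [eventually_gt_atTop 0] with n hn
  have hn' : (0 : ℝ) < n := mod_cast hn
  have h_add : 1 + (n : ℝ)⁻¹ = ((n + 1 : ℕ) : ℝ) / n := by push_cast; field_simp
  simp only [Function.comp_apply, smul_eq_mul, inv_inv, one_rpow]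
  rw [h_add, div_rpow (by positivity) hn'.le, rpow_sub hn', rpow_one]
  field_simp

theorem tendsto_sum_range_div_rpow {f : ℕ → ℝ} {s L : ℝ} (hs : s < 1)
    (h : Tendsto (fun n : ℕ ↦ (n : ℝ) ^ s * f n) atTop (𝓝 L)) :
    Tendsto (fun n : ℕ ↦ (∑ i ∈ Finset.range n, f i) / (n : ℝ) ^ (1 - s)) atTop
      (𝓝 (L / (1 - s))) := by
  have hs' : 0 < 1 - s := sub_pos.2 hs
  set g : ℕ → ℝ := fun i ↦ ((i + 1 : ℕ) : ℝ) ^ (1 - s) - (i : ℝ) ^ (1 - s) with hg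
  have hg_pos (i : ℕ) : 0 < g i :=
    sub_pos.2 (rpow_lt_rpow i.cast_nonneg (mod_cast i.lt_succ_self) hs')
  have hg_sum (n : ℕ) : ∑ i ∈ Finset.range n, g i = (n : ℝ) ^ (1 - s) := by
    rw [hg, Finset.sum_range_sub (fun i : ℕ ↦ (i : ℝ) ^ (1 - s))]
    simp [zero_rpow hs'.ne']
  have hg_top : Tendsto (fun n ↦ ∑ i ∈ Finset.range n, g i) atTop atTop := by
    simp only [hg_sum]
    exact (tendsto_rpow_atTop hs').comp tendsto_natCast_atTop_atTop
  have h_ratio : Tendsto (fun n ↦ f n / g n) atTop (𝓝 (L / (1 - s))) := by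
    refine (h.div (tendsto_rpow_mul_succ_rpow_sub_rpow (1 - s)) hs'.ne').congr' ?_
    filter_upwards [eventually_gt_atTop 0] with n hn
    have hn' : (0 : ℝ) < n := mod_cast hn
    rw [Pi.div_apply, sub_sub_cancel, mul_div_mul_left _ _ (rpow_pos_of_pos hn' s).ne']
  simpa only [hg_sum] using tendsto_sum_range_div_sum_range hg_pos hg_top h_ratio

end StolzCesaro

section Laplace

theorem integrable_mul_pow {α : Type*} [MeasurableSpace α] {μ : Measure α} {φ q : α → ℝ}
    (hφ : Integrable φ μ) (hq_meas : AEStronglyMeasurable q μ) (hq : ∀ᵐ x ∂μ, |q x| ≤ 1) (n : ℕ) :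
    Integrable (fun x ↦ φ x * q x ^ n) μ := by
  refine hφ.mul_bdd (c := 1) (hq_meas.pow n) (hq.mono fun x hx ↦ ?_)
  rw [norm_pow]
  exact pow_le_one₀ (norm_nonneg _) hx

theorem tendsto_rpow_mul_pow_zero (p : ℝ) {ρ : ℝ} (hρ0 : 0 ≤ ρ) (hρ1 : ρ < 1) :
    Tendsto (fun n : ℕ ↦ (n : ℝ) ^ p * ρ ^ n) atTop (𝓝 0) := by
  refine squeeze_zero' (Eventually.of_forall fun n ↦ by positivity) ?_
    (tendsto_pow_const_mul_const_pow_of_abs_lt_one ⌈p⌉₊ (by rwa [abs_of_nonneg hρ0]))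
  filter_upwards [eventually_ge_atTop 1] with n hn
  rw [← rpow_natCast (n : ℝ) ⌈p⌉₊]
  gcongr
  · exact_mod_cast hn
  · exact Nat.le_ceil p

theorem tendsto_rpow_mul_integral_mul_pow_zero {α : Type*} [MeasurableSpace α] {μ : Measure α}
    {φ q : α → ℝ} {ρ : ℝ} (p : ℝ) (hφ : Integrable φ μ) (hq : ∀ᵐ x ∂μ, |q x| ≤ ρ)
    (hρ0 : 0 ≤ ρ) (hρ1 : ρ < 1) :
    Tendsto (fun n : ℕ ↦ (n : ℝ) ^ p * ∫ x, φ x * q x ^ n ∂μ) atTop (𝓝 0) := by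
  have h_bound (n : ℕ) : ‖∫ x, φ x * q x ^ n ∂μ‖ ≤ (∫ x, |φ x| ∂μ) * ρ ^ n := by
    rw [← integral_mul_const]
    refine norm_integral_le_of_norm_le (hφ.abs.mul_const _) (hq.mono fun x hx ↦ ?_)
    rw [norm_mul, norm_pow, norm_eq_abs, norm_eq_abs]
    gcongr
  have h_lim := (tendsto_rpow_mul_pow_zero p hρ0 hρ1).const_mul (∫ x, |φ x| ∂μ)
  rw [mul_zero] at h_lim
  refine squeeze_zero_norm (fun n ↦ ?_) h_lim
  rw [norm_mul, norm_of_nonneg (by positivity), mul_left_comm]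
  gcongr
  exact h_bound n

theorem quasiMeasurePreserving_mul_left_Ioi_zero {t : ℝ} (ht : 0 < t) :
    Measure.QuasiMeasurePreserving (t * ·) (volume.restrict (Ioi 0)) (volume.restrict (Ioi 0)) :=
  (Measure.quasiMeasurePreserving_smul volume ht.ne').restrict fun _ hx ↦ mul_pos ht hx

theorem rpow_neg_mul_integral_Ioi (f : ℝ → ℝ) (a : ℝ) {t : ℝ} (ht : 0 < t) :
    t ^ (-a) * ∫ x in Ioi 0, f x = ∫ y in Ioi 0, t ^ (1 - a) * f (t * y) := by
  have h_subst := integral_comp_mul_left_Ioi' f 0 ht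
  rw [mul_zero, smul_eq_mul] at h_subst
  rw [integral_const_mul, ← h_subst, ← mul_assoc, ← rpow_add_one ht.ne', neg_add_eq_sub]

variable {φ q : ℝ → ℝ} {a b c A : ℝ}

theorem tendsto_mul_const_nhdsGT_zero {ι : Type*} {l : Filter ι} {ε : ι → ℝ} {y : ℝ}
    (hy : 0 < y) (hε : Tendsto ε l (𝓝[>] 0)) : Tendsto (fun i ↦ ε i * y) l (𝓝[>] 0) := by
  simpa only [zero_mul] using TendstoNhdsWithinIoi.mul_const hy hε

theorem tendsto_rpow_mul_comp_mul {ι : Type*} {l : Filter ι} {ε : ι → ℝ} {y : ℝ} (hy : 0 < y)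
    (hφ : Tendsto (fun x ↦ φ x / x ^ (a - 1)) (𝓝[>] 0) (𝓝 A)) (hε : Tendsto ε l (𝓝[>] 0)) :
    Tendsto (fun i ↦ ε i ^ (1 - a) * φ (ε i * y)) l (𝓝 (A * y ^ (a - 1))) := by
  refine ((hφ.comp (tendsto_mul_const_nhdsGT_zero hy hε)).mul_const _).congr' ?_
  filter_upwards [hε self_mem_nhdsWithin] with i (hi : 0 < ε i)
  have hy' := (rpow_pos_of_pos hy (a - 1)).ne'
  have hi' := (rpow_pos_of_pos hi (a - 1)).ne'
  rw [Function.comp_apply, mul_rpow hi.le hy.le, ← neg_sub a 1, rpow_neg hi.le]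
  field_simp

theorem tendsto_comp_mul_pow_exp {ε : ℕ → ℝ} {y : ℝ} (hy : 0 < y)
    (hq : Tendsto (fun x ↦ (1 - q x) / x ^ b) (𝓝[>] 0) (𝓝 c))
    (hε : Tendsto ε atTop (𝓝[>] 0)) (hεb : ∀ᶠ n : ℕ in atTop, n * ε n ^ b = 1) :
    Tendsto (fun n ↦ q (ε n * y) ^ n) atTop (𝓝 (exp (-c * y ^ b))) := by
  have h_lim : Tendsto (fun n : ℕ ↦ n * (q (ε n * y) - 1)) atTop (𝓝 (-c * y ^ b)) := by
    refine ((hq.comp (tendsto_mul_const_nhdsGT_zero hy hε)).neg.mul_const (y ^ b)).congr' ?_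
    filter_upwards [hεb, hε self_mem_nhdsWithin] with n hn (hn_pos : 0 < ε n)
    have hy' := (rpow_pos_of_pos hy b).ne'
    have hn' := (rpow_pos_of_pos hn_pos b).ne'
    rw [Function.comp_apply, mul_rpow hn_pos.le hy.le, eq_div_of_mul_eq hn' hn]
    field_simp
    ring
  refine (tendsto_one_add_pow_exp_of_tendsto h_lim).congr fun n ↦ ?_
  rw [add_sub_cancel]

theorem rpow_mul_abs_comp_mul_pow_le {d t y M : ℝ} {n : ℕ} (ht : 0 < t) (hy : 0 < y)
    (htb : n * t ^ b = 1) (hφ : |φ (t * y)| ≤ M * (t * y) ^ (a - 1)) (hq0 : 0 ≤ q (t * y))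
    (hq : q (t * y) ≤ exp (-d * (t * y) ^ b)) :
    t ^ (1 - a) * (|φ (t * y)| * q (t * y) ^ n) ≤ M * (y ^ (a - 1) * exp (-d * y ^ b)) := by
  have h_exp : exp (-d * (t * y) ^ b) ^ n = exp (-d * y ^ b) := by
    rw [← exp_nat_mul, mul_rpow ht.le hy.le]
    congr 1
    linear_combination (-d * y ^ b) * htb
  have h_rpow : t ^ (1 - a) * (t * y) ^ (a - 1) = y ^ (a - 1) := by
    rw [mul_rpow ht.le hy.le, ← mul_assoc, ← rpow_add ht, sub_add_sub_cancel', sub_self,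
      rpow_zero, one_mul]
  have h_nonneg : 0 ≤ M * (t * y) ^ (a - 1) := (abs_nonneg _).trans hφ
  calc t ^ (1 - a) * (|φ (t * y)| * q (t * y) ^ n)
      ≤ t ^ (1 - a) * (M * (t * y) ^ (a - 1) * exp (-d * (t * y) ^ b) ^ n) := by gcongr
    _ = M * (t ^ (1 - a) * (t * y) ^ (a - 1) * exp (-d * (t * y) ^ b) ^ n) := by ring
    _ = M * (y ^ (a - 1) * exp (-d * y ^ b)) := by rw [h_rpow, h_exp]

theorem tendsto_integral_rpow_mul_comp_mul_pow {d M : ℝ} {ε : ℕ → ℝ} (ha : 0 < a) (hb : 0 < b)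
    (hd : 0 < d) (hφ_meas : AEStronglyMeasurable φ (volume.restrict (Ioi 0)))
    (hq_meas : AEStronglyMeasurable q (volume.restrict (Ioi 0)))
    (hφ_le : ∀ x > 0, |φ x| ≤ M * x ^ (a - 1)) (hq_nonneg : ∀ x > 0, 0 ≤ q x)
    (hq_le : ∀ x > 0, q x ≤ exp (-d * x ^ b))
    (hφ : Tendsto (fun x ↦ φ x / x ^ (a - 1)) (𝓝[>] 0) (𝓝 A))
    (hq : Tendsto (fun x ↦ (1 - q x) / x ^ b) (𝓝[>] 0) (𝓝 c))
    (hε : Tendsto ε atTop (𝓝[>] 0)) (hεb : ∀ᶠ n : ℕ in atTop, n * ε n ^ b = 1) :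
    Tendsto (fun n ↦ ∫ y in Ioi 0, ε n ^ (1 - a) * (φ (ε n * y) * q (ε n * y) ^ n)) atTop
      (𝓝 (∫ y in Ioi 0, A * y ^ (a - 1) * exp (-c * y ^ b))) := by
  refine tendsto_integral_filter_of_dominated_convergence
    (fun y ↦ M * (y ^ (a - 1) * exp (-d * y ^ b))) ?meas ?bound ?integrable ?limit
  case meas =>
    filter_upwards [hε self_mem_nhdsWithin] with n (hn : 0 < ε n)
    exact ((hφ_meas.mul (hq_meas.pow n)).comp_quasiMeasurePreserving
      (quasiMeasurePreserving_mul_left_Ioi_zero hn)).const_mul _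
  case bound =>
    filter_upwards [hεb, hε self_mem_nhdsWithin] with n hn (hn_pos : 0 < ε n)
    refine ae_restrict_of_forall_mem measurableSet_Ioi fun y (hy : 0 < y) ↦ ?_
    have hx : 0 < ε n * y := mul_pos hn_pos hy
    have hq0 := hq_nonneg _ hx
    rw [norm_mul, norm_mul, norm_of_nonneg (rpow_nonneg hn_pos.le _),
      norm_of_nonneg (pow_nonneg hq0 n)]
    exact rpow_mul_abs_comp_mul_pow_le hn_pos hy hn (hφ_le _ hx) hq0 (hq_le _ hx)
  case integrable =>
    exact (integrableOn_rpow_mul_exp_neg_mul_rpow (by linarith) hb hd).const_mul M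
  case limit =>
    refine ae_restrict_of_forall_mem measurableSet_Ioi fun y hy ↦ ?_
    simp only [← mul_assoc]
    exact (tendsto_rpow_mul_comp_mul hy hφ hε).mul (tendsto_comp_mul_pow_exp hy hq hε hεb)

theorem tendsto_rpow_mul_integral_mul_pow_of_le {d M : ℝ} (ha : 0 < a) (hb : 0 < b) (hd : 0 < d)
    (hφ_meas : AEStronglyMeasurable φ (volume.restrict (Ioi 0)))
    (hq_meas : AEStronglyMeasurable q (volume.restrict (Ioi 0)))
    (hφ_le : ∀ x > 0, |φ x| ≤ M * x ^ (a - 1)) (hq_nonneg : ∀ x > 0, 0 ≤ q x)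
    (hq_le : ∀ x > 0, q x ≤ exp (-d * x ^ b))
    (hφ : Tendsto (fun x ↦ φ x / x ^ (a - 1)) (𝓝[>] 0) (𝓝 A))
    (hq : Tendsto (fun x ↦ (1 - q x) / x ^ b) (𝓝[>] 0) (𝓝 c)) :
    Tendsto (fun n : ℕ ↦ (n : ℝ) ^ (a / b) * ∫ x in Ioi 0, φ x * q x ^ n) atTop
      (𝓝 (∫ y in Ioi 0, A * y ^ (a - 1) * exp (-c * y ^ b))) := by
  set ε : ℕ → ℝ := fun n ↦ (n : ℝ) ^ (-b⁻¹) with hε_def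
  have hε_rpow (n : ℕ) (s : ℝ) : ε n ^ s = (n : ℝ) ^ (-(s / b)) := by
    rw [hε_def, ← rpow_mul n.cast_nonneg, div_eq_inv_mul, neg_mul]
  have hε_pos : ∀ᶠ n in atTop, 0 < ε n := by
    filter_upwards [eventually_gt_atTop 0] with n hn
    exact rpow_pos_of_pos (mod_cast hn) _
  have hεb : ∀ᶠ n : ℕ in atTop, n * ε n ^ b = 1 := by
    filter_upwards [eventually_gt_atTop 0] with n hn
    rw [hε_rpow, div_self hb.ne', rpow_neg_one, mul_inv_cancel₀ (mod_cast hn.ne')]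
  have hε : Tendsto ε atTop (𝓝[>] 0) := tendsto_nhdsWithin_iff.2
    ⟨(tendsto_rpow_neg_atTop (inv_pos.2 hb)).comp tendsto_natCast_atTop_atTop, hε_pos⟩
  refine (tendsto_integral_rpow_mul_comp_mul_pow ha hb hd hφ_meas hq_meas hφ_le hq_nonneg hq_le
    hφ hq hε hεb).congr' ?_
  filter_upwards [hε_pos] with n hn
  rw [← rpow_neg_mul_integral_Ioi (fun x ↦ φ x * q x ^ n) a hn, hε_rpow, neg_div, neg_neg]

theorem eventually_abs_le_mul_rpow (hφ : Tendsto (fun x ↦ φ x / x ^ a) (𝓝[>] 0) (𝓝 A)) :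
    ∀ᶠ x in 𝓝[>] 0, |φ x| ≤ (|A| + 1) * x ^ a := by
  filter_upwards [hφ.abs.eventually_lt_const (lt_add_one |A|), self_mem_nhdsWithin]
    with x h_lt (hx : 0 < x)
  have hxa : 0 < x ^ a := rpow_pos_of_pos hx a
  rw [abs_div, abs_of_pos hxa, div_lt_iff₀ hxa] at h_lt
  exact h_lt.le

theorem eventually_le_exp_neg_mul_rpow {d : ℝ} (hd : d < c)
    (hq : Tendsto (fun x ↦ (1 - q x) / x ^ b) (𝓝[>] 0) (𝓝 c)) :
    ∀ᶠ x in 𝓝[>] 0, q x ≤ exp (-d * x ^ b) := by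
  filter_upwards [hq.eventually_const_lt hd, self_mem_nhdsWithin] with x h_lt (hx : 0 < x)
  rw [lt_div_iff₀ (rpow_pos_of_pos hx b)] at h_lt
  linarith [add_one_le_exp (-d * x ^ b)]

theorem lt_one_of_antitoneOn (hc : 0 < c) (hq_anti : AntitoneOn q (Ioi 0))
    (hq : Tendsto (fun x ↦ (1 - q x) / x ^ b) (𝓝[>] 0) (𝓝 c)) {x : ℝ} (hx : 0 < x) : q x < 1 := by
  obtain ⟨y, h_pos, hy : 0 < y, hyx⟩ := ((hq.eventually_const_lt hc).and
    (Ioo_mem_nhdsGT hx)).exists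
  rw [div_pos_iff_of_pos_right (rpow_pos_of_pos hy b), sub_pos] at h_pos
  exact (hq_anti hy hx hyx.le).trans_lt h_pos

theorem tendsto_rpow_mul_integral_Ioc_mul_pow {d M δ : ℝ} (ha : 0 < a) (hb : 0 < b) (hd : 0 < d)
    (hδ : 0 < δ) (hφ_meas : AEStronglyMeasurable φ (volume.restrict (Ioi 0)))
    (hq_meas : AEStronglyMeasurable q (volume.restrict (Ioi 0)))
    (hφ_le : ∀ x ∈ Ioc 0 δ, |φ x| ≤ M * x ^ (a - 1)) (hq_nonneg : ∀ x ∈ Ioc 0 δ, 0 ≤ q x)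
    (hq_le : ∀ x ∈ Ioc 0 δ, q x ≤ exp (-d * x ^ b))
    (hφ : Tendsto (fun x ↦ φ x / x ^ (a - 1)) (𝓝[>] 0) (𝓝 A))
    (hq : Tendsto (fun x ↦ (1 - q x) / x ^ b) (𝓝[>] 0) (𝓝 c)) :
    Tendsto (fun n : ℕ ↦ (n : ℝ) ^ (a / b) * ∫ x in Ioc 0 δ, φ x * q x ^ n) atTop
      (𝓝 (∫ y in Ioi 0, A * y ^ (a - 1) * exp (-c * y ^ b))) := by
  have h_near : ∀ᶠ x in 𝓝[>] 0, x ∈ Iic δ :=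
    mem_of_superset (Ioc_mem_nhdsGT hδ) Ioc_subset_Iic_self
  have hM : 0 ≤ M := by
    have := (abs_nonneg _).trans (hφ_le δ ⟨hδ, le_rfl⟩)
    exact nonneg_of_mul_nonneg_left this (rpow_pos_of_pos hδ _)
  have h_integral (n : ℕ) : ∫ x in Ioi 0, (Iic δ).indicator φ x * (Iic δ).indicator q x ^ n =
      ∫ x in Ioc 0 δ, φ x * q x ^ n := by
    rw [← Ioi_inter_Iic, ← setIntegral_indicator measurableSet_Iic]
    congr with x
    by_cases hx : x ∈ Iic δ <;> simp [hx]
  simp only [← h_integral]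
  refine tendsto_rpow_mul_integral_mul_pow_of_le (M := M) ha hb hd
    (hφ_meas.indicator measurableSet_Iic) (hq_meas.indicator measurableSet_Iic)
    (fun x hx ↦ ?_) (fun x hx ↦ ?_) (fun x hx ↦ ?_) (hφ.congr' ?_) (hq.congr' ?_)
  · by_cases hxδ : x ∈ Iic δ
    · simpa [hxδ] using hφ_le x ⟨hx, hxδ⟩
    · simpa [hxδ] using mul_nonneg hM (rpow_nonneg hx.le _)
  · exact indicator_apply_nonneg fun hxδ ↦ hq_nonneg x ⟨hx, hxδ⟩
  · by_cases hxδ : x ∈ Iic δ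
    · simpa [hxδ] using hq_le x ⟨hx, hxδ⟩
    · simpa [hxδ] using (exp_pos _).le
  all_goals
    filter_upwards [h_near] with x hx
    rw [indicator_of_mem hx]

theorem tendsto_rpow_mul_integral_mul_pow (ha : 0 < a) (hb : 0 < b) (hc : 0 < c)
    (hφ_int : IntegrableOn φ (Ioi 0)) (hq_anti : AntitoneOn q (Ioi 0))
    (hq_nonneg : ∀ x > 0, 0 ≤ q x)
    (hφ : Tendsto (fun x ↦ φ x / x ^ (a - 1)) (𝓝[>] 0) (𝓝 A))
    (hq : Tendsto (fun x ↦ (1 - q x) / x ^ b) (𝓝[>] 0) (𝓝 c)) :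
    Tendsto (fun n : ℕ ↦ (n : ℝ) ^ (a / b) * ∫ x in Ioi 0, φ x * q x ^ n) atTop
      (𝓝 (A * (c ^ (-(a / b)) * (1 / b) * Gamma (a / b)))) := by
  have hq_lt_one {x : ℝ} (hx : 0 < x) : q x < 1 := lt_one_of_antitoneOn hc hq_anti hq hx
  have hq_meas : AEStronglyMeasurable q (volume.restrict (Ioi 0)) :=
    (aemeasurable_restrict_of_antitoneOn measurableSet_Ioi hq_anti).aestronglyMeasurable
  have h_int (n : ℕ) : IntegrableOn (fun x ↦ φ x * q x ^ n) (Ioi 0) :=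
    integrable_mul_pow hφ_int hq_meas (ae_restrict_of_forall_mem measurableSet_Ioi fun x hx ↦
      abs_le.2 ⟨neg_one_lt_zero.le.trans (hq_nonneg x hx), (hq_lt_one hx).le⟩) n
  obtain ⟨δ, hδ : 0 < δ, h_near⟩ := mem_nhdsGT_iff_exists_Ioc_subset.1
    ((eventually_abs_le_mul_rpow hφ).and (eventually_le_exp_neg_mul_rpow (half_lt_self hc) hq))
  have h_head := tendsto_rpow_mul_integral_Ioc_mul_pow ha hb (half_pos hc) hδ
    hφ_int.aestronglyMeasurable hq_meas (fun x hx ↦ (h_near hx).1) (fun x hx ↦ hq_nonneg x hx.1)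
    (fun x hx ↦ (h_near hx).2) hφ hq
  have hq_tail : ∀ x ∈ Ioi δ, |q x| ≤ q δ := fun x (hx : δ < x) ↦ by
    rw [abs_of_nonneg (hq_nonneg x (hδ.trans hx))]
    exact hq_anti hδ (hδ.trans hx) hx.le
  have h_tail : Tendsto (fun n : ℕ ↦ (n : ℝ) ^ (a / b) * ∫ x in Ioi δ, φ x * q x ^ n)
      atTop (𝓝 0) :=
    tendsto_rpow_mul_integral_mul_pow_zero _ (hφ_int.mono_set (Ioi_subset_Ioi hδ.le))
      (ae_restrict_of_forall_mem measurableSet_Ioi hq_tail) (hq_nonneg δ hδ) (hq_lt_one hδ)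
  have h_limit : ∫ y in Ioi 0, A * y ^ (a - 1) * exp (-c * y ^ b) =
      A * (c ^ (-(a / b)) * (1 / b) * Gamma (a / b)) := by
    simp only [mul_assoc A, integral_const_mul]
    rw [integral_rpow_mul_exp_neg_mul_rpow hb (by linarith) hc, sub_add_cancel, neg_div]
  rw [← h_limit, ← add_zero (∫ y in Ioi 0, _)]
  refine (h_head.add h_tail).congr fun n ↦ ?_
  rw [← mul_add, ← setIntegral_union Ioc_disjoint_Ioi_same measurableSet_Ioi
    ((h_int n).mono_set Ioc_subset_Ioi_self) ((h_int n).mono_set (Ioi_subset_Ioi hδ.le)),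
    Ioc_union_Ioi_eq_Ioi hδ.le]

end Laplace

section IncompleteGamma

variable {s x : ℝ}

/-- The upper incomplete gamma function `Γ(s,x)` at a real shape `s`. -/
noncomputable def upperIncompleteGamma (s x : ℝ) : ℝ :=
  ∫ t in Ioi x, exp (-t) * t ^ (s - 1)

theorem upperGamma_eq_upperIncompleteGamma {k : ℕ} (hk : 1 ≤ k) (x : ℝ) :
    upperGamma k x = upperIncompleteGamma k x := by
  refine setIntegral_congr_fun measurableSet_Ioi fun t _ ↦ ?_
  rw [mul_comm, ← Nat.cast_pred hk, rpow_natCast]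

theorem upperIncompleteGamma_nonneg (hx : 0 ≤ x) : 0 ≤ upperIncompleteGamma s x :=
  setIntegral_nonneg measurableSet_Ioi fun _ ht ↦
    mul_nonneg (exp_pos _).le (rpow_nonneg (hx.trans (le_of_lt ht)) _)

theorem antitoneOn_upperIncompleteGamma (hs : 0 < s) :
    AntitoneOn (upperIncompleteGamma s) (Ici 0) := by
  intro x (hx : 0 ≤ x) y _ hxy
  refine setIntegral_mono_set ((GammaIntegral_convergent hs).mono_set (Ioi_subset_Ioi hx)) ?_
    (Ioi_subset_Ioi hxy).eventuallyLE
  exact ae_restrict_of_forall_mem measurableSet_Ioi fun t ht ↦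
    mul_nonneg (exp_pos _).le (rpow_nonneg (hx.trans (le_of_lt ht)) _)

theorem intervalIntegrable_exp_neg_mul_rpow (hs : 0 < s) (hx : 0 ≤ x) :
    IntervalIntegrable (fun t ↦ exp (-t) * t ^ (s - 1)) volume 0 x :=
  (intervalIntegrable_iff_integrableOn_Ioc_of_le hx).2
    ((GammaIntegral_convergent hs).mono_set Ioc_subset_Ioi_self)

theorem Gamma_sub_upperIncompleteGamma (hs : 0 < s) (hx : 0 ≤ x) :
    Gamma s - upperIncompleteGamma s x = ∫ t in 0..x, exp (-t) * t ^ (s - 1) := by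
  rw [Gamma_eq_integral hs, sub_eq_iff_eq_add]
  exact (intervalIntegral.integral_interval_add_Ioi (GammaIntegral_convergent hs)
    ((GammaIntegral_convergent hs).mono_set (Ioi_subset_Ioi hx))).symm

theorem integral_rpow_sub_one (hs : 0 < s) : ∫ t in 0..x, t ^ (s - 1) = x ^ s / s := by
  rw [integral_rpow (Or.inl (by linarith)), sub_add_cancel, zero_rpow hs.ne', sub_zero]

theorem Gamma_sub_upperIncompleteGamma_le (hs : 0 < s) (hx : 0 ≤ x) :
    Gamma s - upperIncompleteGamma s x ≤ x ^ s / s := by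
  rw [Gamma_sub_upperIncompleteGamma hs hx, ← integral_rpow_sub_one hs]
  refine intervalIntegral.integral_mono_on hx (intervalIntegrable_exp_neg_mul_rpow hs hx)
    (intervalIntegral.intervalIntegrable_rpow' (by linarith)) fun t ht ↦ ?_
  exact mul_le_of_le_one_left (rpow_nonneg ht.1 _) (exp_le_one_iff.2 (neg_nonpos.2 ht.1))

theorem le_Gamma_sub_upperIncompleteGamma (hs : 0 < s) (hx : 0 ≤ x) :
    exp (-x) * (x ^ s / s) ≤ Gamma s - upperIncompleteGamma s x := by
  rw [Gamma_sub_upperIncompleteGamma hs hx, ← integral_rpow_sub_one hs,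
    ← intervalIntegral.integral_const_mul]
  refine intervalIntegral.integral_mono_on hx
    ((intervalIntegral.intervalIntegrable_rpow' (by linarith)).const_mul _)
    (intervalIntegrable_exp_neg_mul_rpow hs hx) fun t ht ↦ ?_
  exact mul_le_mul_of_nonneg_right (exp_le_exp.2 (neg_le_neg ht.2)) (rpow_nonneg ht.1 _)

theorem tendsto_exp_neg_nhdsGT_zero : Tendsto (fun x : ℝ ↦ exp (-x)) (𝓝[>] 0) (𝓝 1) := by
  have h : Continuous fun x : ℝ ↦ exp (-x) := by fun_prop
  simpa using (h.tendsto 0).mono_left nhdsWithin_le_nhds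

theorem tendsto_Gamma_sub_upperIncompleteGamma_div_rpow (hs : 0 < s) :
    Tendsto (fun x ↦ (Gamma s - upperIncompleteGamma s x) / x ^ s) (𝓝[>] 0) (𝓝 (1 / s)) := by
  have h_lower := tendsto_exp_neg_nhdsGT_zero.mul_const (1 / s)
  rw [one_mul] at h_lower
  refine tendsto_of_tendsto_of_tendsto_of_le_of_le' h_lower tendsto_const_nhds ?_ ?_
  all_goals
    filter_upwards [self_mem_nhdsWithin] with x (hx : 0 < x)
    have hxs : 0 < x ^ s := rpow_pos_of_pos hx s
  · rw [le_div_iff₀ hxs, mul_assoc, one_div_mul_eq_div]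
    exact le_Gamma_sub_upperIncompleteGamma hs hx.le
  · rw [div_le_iff₀ hxs, one_div_mul_eq_div]
    exact Gamma_sub_upperIncompleteGamma_le hs hx.le

theorem tendsto_one_sub_upperIncompleteGamma_div_Gamma_div_rpow (hs : 0 < s) :
    Tendsto (fun x ↦ (1 - upperIncompleteGamma s x / Gamma s) / x ^ s) (𝓝[>] 0)
      (𝓝 (Gamma (s + 1))⁻¹) := by
  have hΓ := (Gamma_pos_of_pos hs).ne'
  rw [Gamma_add_one hs.ne', mul_inv, ← one_div s, ← div_eq_mul_inv]
  refine ((tendsto_Gamma_sub_upperIncompleteGamma_div_rpow hs).div_const _).congr fun x ↦ ?_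
  field_simp

end IncompleteGamma

section Records

variable {k r : ℝ}

/-- The probability `p_{r,i}` that a `Gamma(r,1)` clock rings before `i` independent `Gamma(k,1)`
clocks, for real shapes `k` and `r`: the integral over the time `x` of the first clock. -/
noncomputable def recordProb (k r : ℝ) (i : ℕ) : ℝ :=
  ∫ x in Ioi 0, exp (-x) * x ^ (r - 1) / Gamma r * (upperIncompleteGamma k x / Gamma k) ^ i

theorem recordProb_natCast {k r : ℕ} (hk : 1 ≤ k) (hr : 1 ≤ r) (i : ℕ) :
    recordProb k r i = ∫ x in Ioi (0 : ℝ), x ^ (r - 1) * exp (-x) / Gamma r *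
      (upperGamma k x / (Nat.factorial (k - 1) : ℝ)) ^ i := by
  have hΓ : Gamma k = Nat.factorial (k - 1) := by
    rw [← Gamma_nat_eq_factorial, Nat.cast_pred hk, sub_add_cancel]
  refine setIntegral_congr_fun measurableSet_Ioi fun x _ ↦ ?_
  rw [upperGamma_eq_upperIncompleteGamma hk, hΓ, ← Nat.cast_pred hr, rpow_natCast,
    mul_comm (exp _)]

theorem tendsto_rpow_mul_recordProb (hk : 0 < k) (hr : 0 < r) :
    Tendsto (fun n : ℕ ↦ (n : ℝ) ^ (r / k) * recordProb k r n) atTop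
      (𝓝 (Gamma (k + 1) ^ (r / k) / k * (Gamma (r / k) / Gamma r))) := by
  have hΓk : 0 < Gamma k := Gamma_pos_of_pos hk
  have hΓk1 : 0 < Gamma (k + 1) := Gamma_pos_of_pos (by linarith)
  have h_weight : Tendsto (fun x ↦ exp (-x) * x ^ (r - 1) / Gamma r / x ^ (r - 1)) (𝓝[>] 0)
      (𝓝 (1 / Gamma r)) := by
    refine (tendsto_exp_neg_nhdsGT_zero.div_const (Gamma r)).congr' ?_
    filter_upwards [self_mem_nhdsWithin] with x (hx : 0 < x)
    rw [div_right_comm, mul_div_cancel_right₀ _ (rpow_pos_of_pos hx _).ne']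
  have h_anti : AntitoneOn (fun x ↦ upperIncompleteGamma k x / Gamma k) (Ioi 0) :=
    fun x (hx : 0 < x) y (hy : 0 < y) hxy ↦ div_le_div_of_nonneg_right
      (antitoneOn_upperIncompleteGamma hk hx.le hy.le hxy) hΓk.le
  have h_laplace := tendsto_rpow_mul_integral_mul_pow hr hk (inv_pos.2 hΓk1)
    ((GammaIntegral_convergent hr).div_const _) h_anti
    (fun x hx ↦ div_nonneg (upperIncompleteGamma_nonneg (le_of_lt hx)) hΓk.le) h_weight
    (tendsto_one_sub_upperIncompleteGamma_div_Gamma_div_rpow hk)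
  have h_const : Gamma (k + 1) ^ (r / k) / k * (Gamma (r / k) / Gamma r) =
      1 / Gamma r * ((Gamma (k + 1))⁻¹ ^ (-(r / k)) * (1 / k) * Gamma (r / k)) := by
    rw [inv_rpow hΓk1.le, rpow_neg hΓk1.le, inv_inv]
    ring
  rw [h_const]
  exact h_laplace

theorem stmt13_general (hr : 0 < r) (hrk : r < k) :
    Tendsto (fun n : ℕ ↦ (∑ i ∈ Finset.range n, recordProb k r i) /
        (Gamma (k + 1) ^ (r / k) / (k - r) * (Gamma (r / k) / Gamma r) * (n : ℝ) ^ (1 - r / k)))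
      atTop (𝓝 1) := by
  have hk : 0 < k := hr.trans hrk
  set η := Gamma (k + 1) ^ (r / k) / (k - r) * (Gamma (r / k) / Gamma r) with hη_def
  have hη : 0 < η :=
    mul_pos (div_pos (rpow_pos_of_pos (Gamma_pos_of_pos (by linarith)) _) (sub_pos.2 hrk))
      (div_pos (Gamma_pos_of_pos (div_pos hr hk)) (Gamma_pos_of_pos hr))
  have h_const : Gamma (k + 1) ^ (r / k) / k * (Gamma (r / k) / Gamma r) / (1 - r / k) = η := by
    rw [hη_def, one_sub_div hk.ne']
    have := (sub_pos.2 hrk).ne'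
    field_simp
  have h_sum := tendsto_sum_range_div_rpow ((div_lt_one hk).2 hrk)
    (tendsto_rpow_mul_recordProb hk hr)
  rw [h_const] at h_sum
  have h_quot := h_sum.div_const η
  rw [div_self hη.ne'] at h_quot
  refine h_quot.congr fun n ↦ ?_
  rw [div_div, mul_comm η]

end Records

/-- The expected number of `r`-records on a path of `n` nodes satisfies
`E[X_{n,r}] ~ η_{k,r} n^{1-r/k}` where `η_{k,r} = ((k!)^{r/k}/(k-r)) Γ(r/k)/Γ(r)`. -/
theorem stmt13 (k r : ℕ) (hk : 2 ≤ k) (hr1 : 1 ≤ r) (hr2 : r ≤ k - 1) :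
    Tendsto (fun n : ℕ =>
        (∑ i ∈ Finset.range n, ∫ x in Set.Ioi (0 : ℝ),
            x ^ (r - 1) * Real.exp (-x) / Real.Gamma r *
              (upperGamma k x / (Nat.factorial (k - 1) : ℝ)) ^ i) /
          ((Nat.factorial k : ℝ) ^ ((r : ℝ) / k) / ((k : ℝ) - r) *
              (Real.Gamma ((r : ℝ) / k) / Real.Gamma r) * (n : ℝ) ^ (1 - (r : ℝ) / k)))
      atTop (nhds 1) := by
  simpa only [recordProb_natCast (show 1 ≤ k by lia) hr1, Gamma_nat_eq_factorial] using
    stmt13_general (k := k) (r := r) (mod_cast hr1) (mod_cast show r < k by lia)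
end
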